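/- Let L, and for each layer ℓ ∈ {1,…,L}, dimensions d_out(ℓ), d_in(ℓ), r(ℓ) be positive integers, and let A_ℓ ∈ ℝ^{d_in(ℓ)×r(ℓ)} have orthonormal columns (A_ℓᵀA_ℓ = I). Let f be a differentiable function on the product parameter space with Lip-Lipschitz gradient, let μ > 0, and let W be a point of the parameter space. Then for every layer ℓ, ∇_{W_ℓ} f_{μ,A}(W) · A_ℓA_ℓᵀ = E_R[ ((f(W + μΔ(R)) − f(W))/μ) · R_ℓA_ℓᵀ ]; that is, the expected AGZO two-point finite-difference estimator equals the gradient of the subspace-smoothed objective projected onto span(A_ℓ). -/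

import Mathlib

/-!
Gaussian integration by parts in one variable reads `E[g(ξ) ξ] = E[g'(ξ)]`; by Fubini it passes to
each coordinate of a product measure, so `E[g(R) R_{ℓ,i,k}] = E[∂_{ℓ,i,k} g(R)]`. Apply this to
`g(R) = f(W + μΔ(R)) - f(W)`. Since `Δ` sends the coordinate direction `(ℓ, i, k)` to `E_{ik}A_ℓᵀ`
in layer `ℓ`, the chain rule and differentiation under the integral turn the right-hand side into
`μ` times the `(i, k)` entry of `∇_{W_ℓ} f_{μ,A}(W) · A_ℓ`. Multiplying on the right by `A_ℓᵀ` gives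
the claim. Since the derivative of `f` grows polynomially, every integrand is dominated by a
polynomial in `‖R‖`, and Gaussian measures have all moments.
-/

open MeasureTheory ProbabilityTheory Matrix

attribute [local instance] Matrix.frobeniusNormedAddCommGroup Matrix.frobeniusNormedSpace
attribute [-instance] instTopologicalSpaceMatrix Matrix.instUniformSpace

noncomputable section

/-- Entrywise expectation of a matrix-valued function. -/
def matExp {Ω : Type*} [MeasurableSpace Ω] (P : Measure Ω)
    {ι κ : Type*} (F : Ω → Matrix ι κ ℝ) : Matrix ι κ ℝ :=
  Matrix.of fun i j => ∫ ω, F ω i j ∂P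

variable {L : ℕ} {dout din r : Fin L → ℕ}

/-- The block of the (Frobenius) gradient of `f` corresponding to layer `ℓ`:
its `(i,j)` entry is the partial derivative of `f` in the direction of the
standard basis matrix `E_{ij}` of layer `ℓ`. -/
def gradBlock (f : ((ℓ : Fin L) → Matrix (Fin (dout ℓ)) (Fin (din ℓ)) ℝ) → ℝ)
    (W : (ℓ : Fin L) → Matrix (Fin (dout ℓ)) (Fin (din ℓ)) ℝ) (ℓ : Fin L) :
    Matrix (Fin (dout ℓ)) (Fin (din ℓ)) ℝ :=
  Matrix.of fun i j => fderiv ℝ f W (Pi.single ℓ (Matrix.single i j 1))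

/-- The product of standard Gaussian measures over all entries of all blocks
`R_ℓ ∈ ℝ^{dout(ℓ) × r(ℓ)}` (i.i.d. standard Gaussian entries). -/
def gaussBlocks (dout r : Fin L → ℕ) :
    Measure ((ℓ : Fin L) → Fin (dout ℓ) → Fin (r ℓ) → ℝ) :=
  Measure.pi fun _ => Measure.pi fun _ => Measure.pi fun _ => gaussianReal 0 1

/-- The AGZO perturbation `Δ(R) = (R₁A₁ᵀ, …, R_L A_Lᵀ)`. -/
def perturbA (A : (ℓ : Fin L) → Matrix (Fin (din ℓ)) (Fin (r ℓ)) ℝ)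
    (R : (ℓ : Fin L) → Fin (dout ℓ) → Fin (r ℓ) → ℝ) :
    (ℓ : Fin L) → Matrix (Fin (dout ℓ)) (Fin (din ℓ)) ℝ :=
  fun ℓ => Matrix.of (R ℓ) * (A ℓ)ᵀ

/-- The subspace-smoothed objective `f_{μ,A}(W) = E_R[f(W + μΔ(R))]`. -/
def smoothedA (f : ((ℓ : Fin L) → Matrix (Fin (dout ℓ)) (Fin (din ℓ)) ℝ) → ℝ)
    (μ : ℝ) (A : (ℓ : Fin L) → Matrix (Fin (din ℓ)) (Fin (r ℓ)) ℝ)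
    (W : (ℓ : Fin L) → Matrix (Fin (dout ℓ)) (Fin (din ℓ)) ℝ) : ℝ :=
  ∫ R, f (W + μ • perturbA A R) ∂(gaussBlocks dout r)

section PolynomialGrowth

variable {E F G : Type*} [NormedAddCommGroup E] [NormedAddCommGroup F] [NormedAddCommGroup G]

/-- `f` is bounded in norm by a polynomial in the norm of its argument. -/
def HasPolyGrowth (f : E → F) : Prop :=
  ∃ (C : ℝ) (n : ℕ), ∀ x, ‖f x‖ ≤ C * (1 + ‖x‖) ^ n

theorem HasPolyGrowth.of_lipschitzWith {K : NNReal} {f : E → F} (hf : LipschitzWith K f) :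
    HasPolyGrowth f := by
  refine ⟨‖f 0‖ + K, 1, fun x => ?_⟩
  calc ‖f x‖ ≤ ‖f 0‖ + ‖f x - f 0‖ := norm_le_norm_add_norm_sub' _ _
    _ ≤ ‖f 0‖ + K * ‖x‖ := by simpa using hf.norm_sub_le x 0
    _ ≤ (‖f 0‖ + K) * (1 + ‖x‖) ^ 1 := by
      nlinarith [mul_nonneg (norm_nonneg (f 0)) (norm_nonneg x), K.coe_nonneg]

theorem HasPolyGrowth.comp {g : F → G} {f : E → F} (hg : HasPolyGrowth g) (hf : HasPolyGrowth f) :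
    HasPolyGrowth (g ∘ f) := by
  obtain ⟨C, m, hg⟩ := hg
  obtain ⟨K, n, hf⟩ := hf
  have hC : 0 ≤ C := by simpa using (norm_nonneg _).trans (hg 0)
  refine ⟨C * (1 + K) ^ m, n * m, fun x => ?_⟩
  have one_add_le : 1 + ‖f x‖ ≤ (1 + K) * (1 + ‖x‖) ^ n := by
    linarith [hf x, one_le_pow₀ (n := n) (le_add_of_nonneg_right (norm_nonneg x) : 1 ≤ 1 + ‖x‖)]
  calc ‖g (f x)‖ ≤ C * (1 + ‖f x‖) ^ m := hg _
    _ ≤ C * ((1 + K) * (1 + ‖x‖) ^ n) ^ m := by gcongr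
    _ = C * (1 + K) ^ m * (1 + ‖x‖) ^ (n * m) := by rw [mul_pow, pow_mul, mul_assoc]

theorem HasPolyGrowth.mul {R : Type*} [NormedRing R] {f g : E → R} (hf : HasPolyGrowth f)
    (hg : HasPolyGrowth g) : HasPolyGrowth fun x => f x * g x := by
  obtain ⟨C, m, hf⟩ := hf
  obtain ⟨K, n, hg⟩ := hg
  refine ⟨C * K, m + n, fun x => ?_⟩
  calc ‖f x * g x‖ ≤ ‖f x‖ * ‖g x‖ := norm_mul_le _ _
    _ ≤ (C * (1 + ‖x‖) ^ m) * (K * (1 + ‖x‖) ^ n) :=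
      mul_le_mul (hf x) (hg x) (norm_nonneg _) ((norm_nonneg _).trans (hf x))
    _ = C * K * (1 + ‖x‖) ^ (m + n) := by ring

variable [NormedSpace ℝ E] [NormedSpace ℝ F] [NormedSpace ℝ G]

theorem HasPolyGrowth.of_continuousLinearMap (T : E →L[ℝ] F) : HasPolyGrowth T :=
  .of_lipschitzWith T.lipschitz

theorem HasPolyGrowth.of_fderiv {f : E → F} (hd : Differentiable ℝ f)
    (hf : HasPolyGrowth (fderiv ℝ f)) : HasPolyGrowth f := by
  obtain ⟨C, n, hf⟩ := hf
  have hC : 0 ≤ C := by simpa using (norm_nonneg _).trans (hf 0)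
  refine ⟨‖f 0‖ + C, n + 1, fun x => ?_⟩
  have mean_value : ‖f x - f 0‖ ≤ C * (1 + ‖x‖) ^ n * ‖x‖ := by
    have fderiv_le (y : E) (hy : y ∈ Metric.closedBall 0 ‖x‖) :
        ‖fderiv ℝ f y‖ ≤ C * (1 + ‖x‖) ^ n := by
      have : ‖y‖ ≤ ‖x‖ := by simpa using hy
      exact (hf y).trans (by gcongr)
    simpa using (convex_closedBall (0 : E) ‖x‖).norm_image_sub_le_of_norm_fderiv_le
      (x := 0) (y := x) (fun y _ => hd y) fderiv_le (by simp) (by simp)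
  calc ‖f x‖ ≤ ‖f 0‖ + ‖f x - f 0‖ := norm_le_norm_add_norm_sub' _ _
    _ ≤ ‖f 0‖ * (1 + ‖x‖) ^ (n + 1) + C * (1 + ‖x‖) ^ n * (1 + ‖x‖) := by
      gcongr
      · exact le_mul_of_one_le_right (norm_nonneg _)
          (one_le_pow₀ (le_add_of_nonneg_right (norm_nonneg x)))
      · exact mean_value.trans (by gcongr; linarith)
    _ = (‖f 0‖ + C) * (1 + ‖x‖) ^ (n + 1) := by ring

/-- The class of functions for which Stein's identity is stated: everywhere differentiable, with a
derivative of polynomial growth. Lipschitz continuity of the derivative is a special case. -/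
structure HasPolyGrowthFDeriv (f : E → F) : Prop where
  differentiable : Differentiable ℝ f
  fderiv_hasPolyGrowth : HasPolyGrowth (fderiv ℝ f)

theorem HasPolyGrowthFDeriv.hasPolyGrowth {f : E → F} (hf : HasPolyGrowthFDeriv f) :
    HasPolyGrowth f :=
  .of_fderiv hf.differentiable hf.fderiv_hasPolyGrowth

theorem HasPolyGrowthFDeriv.sub_const {f : E → F} (hf : HasPolyGrowthFDeriv f) (c : F) :
    HasPolyGrowthFDeriv fun x => f x - c where
  differentiable := hf.differentiable.sub_const c
  fderiv_hasPolyGrowth := by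
    rw [funext fun x => fderiv_sub_const (𝕜 := ℝ) (f := f) (x := x) c]
    exact hf.fderiv_hasPolyGrowth

theorem fderiv_comp_const_add_continuousLinearMap {f : F → G} (hf : Differentiable ℝ f) (a : F)
    (T : E →L[ℝ] F) (x : E) :
    fderiv ℝ (fun x => f (a + T x)) x = (fderiv ℝ f (a + T x)).comp T :=
  ((hf _).hasFDerivAt.comp x (T.hasFDerivAt.const_add a)).fderiv

theorem HasPolyGrowthFDeriv.comp_const_add_continuousLinearMap {f : F → G}
    (hf : HasPolyGrowthFDeriv f) (a : F) (T : E →L[ℝ] F) :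
    HasPolyGrowthFDeriv fun x => f (a + T x) where
  differentiable := hf.differentiable.comp (T.differentiable.const_add a)
  fderiv_hasPolyGrowth := by
    have affine : HasPolyGrowth fun x => a + T x :=
      .of_lipschitzWith (K := ‖T‖₊) fun x y => by simpa using T.lipschitz x y
    rw [funext (fderiv_comp_const_add_continuousLinearMap hf.differentiable a T)]
    exact (HasPolyGrowth.of_continuousLinearMap
      ((ContinuousLinearMap.compL ℝ E F G).flip T)).comp (hf.fderiv_hasPolyGrowth.comp affine)

end PolynomialGrowth

section Moments

variable {Ω E F : Type*} [MeasurableSpace Ω] {P : Measure Ω} [IsFiniteMeasure P]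
  [NormedAddCommGroup E] [NormedAddCommGroup F]

theorem HasPolyGrowth.integrable_comp {h : E → F} (hh : HasPolyGrowth h) {Y : Ω → E}
    (hY : ∀ n : ℕ, MemLp Y n P) (hm : AEStronglyMeasurable (fun ω => h (Y ω)) P) :
    Integrable (fun ω => h (Y ω)) P := by
  obtain ⟨C, n, hh⟩ := hh
  have pow_integrable : Integrable (fun ω => ‖1 + ‖Y ω‖‖ ^ n) P :=
    ((memLp_const (1 : ℝ)).add (hY n).norm).integrable_norm_pow'
  refine (pow_integrable.const_mul C).mono' hm (.of_forall fun ω => (hh _).trans_eq ?_)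
  rw [Real.norm_of_nonneg (by positivity)]

theorem HasPolyGrowthFDeriv.integrable_comp [NormedSpace ℝ E] [NormedSpace ℝ F] {f : E → F}
    (hf : HasPolyGrowthFDeriv f) {Y : Ω → E} (hY : ∀ n : ℕ, MemLp Y n P) :
    Integrable (fun ω => f (Y ω)) P :=
  hf.hasPolyGrowth.integrable_comp hY
    (hf.differentiable.continuous.comp_aestronglyMeasurable (hY 0).aestronglyMeasurable)

theorem HasPolyGrowthFDeriv.integrable_fderiv_comp [NormedSpace ℝ E] [FiniteDimensional ℝ E]
    [NormedSpace ℝ F] [FiniteDimensional ℝ F] {f : E → F} (hf : HasPolyGrowthFDeriv f)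
    {Y : Ω → E} (hY : ∀ n : ℕ, MemLp Y n P) :
    Integrable (fun ω => fderiv ℝ f (Y ω)) P := by
  borelize E
  have := FiniteDimensional.complete ℝ F
  have := FiniteDimensional.proper_real F
  refine hf.fderiv_hasPolyGrowth.integrable_comp hY (AEMeasurable.aestronglyMeasurable ?_)
  exact (measurable_fderiv ℝ f).comp_aemeasurable (hY 0).aestronglyMeasurable.aemeasurable

theorem HasPolyGrowthFDeriv.hasFDerivAt_integral_add [NormedSpace ℝ E] [FiniteDimensional ℝ E]
    [NormedSpace ℝ F] [FiniteDimensional ℝ F] {f : E → F}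
    (hf : HasPolyGrowthFDeriv f) {Y : Ω → E} (hY : ∀ n : ℕ, MemLp Y n P) (W : E) :
    HasFDerivAt (fun W => ∫ ω, f (W + Y ω) ∂P) (∫ ω, fderiv ℝ f (W + Y ω) ∂P) W := by
  have translate (W : E) (n : ℕ) : MemLp (fun ω => W + Y ω) n P := (memLp_const W).add (hY n)
  obtain ⟨C, n, hC⟩ := hf.fderiv_hasPolyGrowth
  have hC0 : 0 ≤ C := by simpa using (norm_nonneg _).trans (hC 0)
  have bound_integrable : Integrable (fun ω => C * ‖(2 + ‖W‖) + ‖Y ω‖‖ ^ n) P :=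
    ((memLp_const (2 + ‖W‖)).add (hY n).norm).integrable_norm_pow'.const_mul C
  have fderiv_le (ω : Ω) (x : E) (hx : x ∈ Metric.ball W 1) :
      ‖fderiv ℝ f (x + Y ω)‖ ≤ C * ‖(2 + ‖W‖) + ‖Y ω‖‖ ^ n := by
    have hxW : ‖x‖ ≤ ‖W‖ + 1 :=
      (norm_le_norm_add_norm_sub' x W).trans (by gcongr; exact (mem_ball_iff_norm.1 hx).le)
    have one_add_le : 1 + ‖x + Y ω‖ ≤ (2 + ‖W‖) + ‖Y ω‖ := by linarith [norm_add_le x (Y ω)]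
    exact (hC _).trans (by gcongr; exact one_add_le.trans (Real.le_norm_self _))
  exact hasFDerivAt_integral_of_dominated_of_fderiv_le (𝕜 := ℝ) (Metric.ball_mem_nhds W one_pos)
    (.of_forall fun x => (hf.integrable_comp (translate x)).aestronglyMeasurable)
    (hf.integrable_comp (translate W))
    (hf.integrable_fderiv_comp (translate W)).aestronglyMeasurable
    (.of_forall fderiv_le) bound_integrable
    (.of_forall fun ω x _ => (hasFDerivAt_comp_add_right (Y ω)).2 (hf.differentiable _).hasFDerivAt)

theorem memLp_id_pi {ι : Type*} [Fintype ι] {E : ι → Type*} [∀ i, NormedAddCommGroup (E i)]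
    [∀ i, MeasurableSpace (E i)] {P : ∀ i, Measure (E i)} [∀ i, IsProbabilityMeasure (P i)]
    {p : ENNReal} (hP : ∀ i, MemLp id p (P i)) : MemLp id p (Measure.pi P) :=
  memLp_pi_iff.2 fun i => (hP i).comp_measurePreserving (measurePreserving_eval P i)

end Moments

section Resampling

variable {ι : Type*} [Fintype ι] [DecidableEq ι] {E : ι → Type*} [∀ i, MeasurableSpace (E i)]
  (P : ∀ i, Measure (E i)) [∀ i, SigmaFinite (P i)] (i : ι) [IsProbabilityMeasure (P i)]

theorem measurePreserving_update :
    MeasurePreserving (fun p : (∀ j, E j) × E i => Function.update p.1 i p.2)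
      ((Measure.pi P).prod (P i)) (Measure.pi P) where
  measurable := measurable_update'
  map_eq := by
    refine (Measure.pi_eq fun s hs => ?_).symm
    have preimage_pi : (fun p : (∀ j, E j) × E i => Function.update p.1 i p.2) ⁻¹' Set.univ.pi s
        = Set.univ.pi (Function.update s i Set.univ) ×ˢ s i := by
      ext ⟨x, t⟩
      simp only [Set.mem_preimage, Set.mem_univ_pi, Set.mem_prod,
        Function.forall_update_iff x (p := fun j y => y ∈ s j),
        Function.forall_update_iff s (p := fun j u => x j ∈ u)]
      tauto
    rw [Measure.map_apply measurable_update' (.univ_pi hs), preimage_pi, Measure.prod_prod,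
      Measure.pi_pi, ← Finset.prod_erase_mul _ (fun j => P j (s j)) (Finset.mem_univ i),
      ← Finset.prod_erase_mul _ _ (Finset.mem_univ i), Function.update_self, measure_univ, mul_one]
    congr 1
    refine Finset.prod_congr rfl fun j hj => ?_
    rw [Function.update_of_ne (Finset.ne_of_mem_erase hj)]

theorem integral_pi_eq_integral_integral_update {F : Type*} [NormedAddCommGroup F] [NormedSpace ℝ F]
    {h : (∀ i, E i) → F} (hh : Integrable h (Measure.pi P)) :
    ∫ x, h x ∂(Measure.pi P) =
      ∫ x, ∫ t, h (Function.update x i t) ∂(P i) ∂(Measure.pi P) := by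
  have mp := measurePreserving_update P i
  calc ∫ x, h x ∂(Measure.pi P)
      = ∫ p, h (Function.update p.1 i p.2) ∂((Measure.pi P).prod (P i)) := by
        rw [← mp.map_eq] at hh
        rw [← integral_map mp.measurable.aemeasurable hh.aestronglyMeasurable, mp.map_eq]
    _ = ∫ x, ∫ t, h (Function.update x i t) ∂(P i) ∂(Measure.pi P) :=
        integral_prod _ (mp.integrable_comp_of_integrable hh)

end Resampling

section SteinIdentity

variable {E H : Type*} [NormedAddCommGroup E] [NormedSpace ℝ E] [MeasurableSpace E]
  [NormedAddCommGroup H] [NormedSpace ℝ H]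

/-- Stein's identity `E[g X] = E[∂_v g]` for the linear functional `X` and the direction `v`. For a
centered Gaussian `P` it holds exactly when `v` is the covariance of `X` with the identity. -/
def IsSteinPair (P : Measure E) (X : StrongDual ℝ E) (v : E) : Prop :=
  ∀ g : E → ℝ, HasPolyGrowthFDeriv g → ∫ x, g x * X x ∂P = ∫ x, fderiv ℝ g x v ∂P

theorem HasPolyGrowthFDeriv.integrable_mul_dual [OpensMeasurableSpace E] {P : Measure E}
    [IsFiniteMeasure P] {g : E → ℝ} (hg : HasPolyGrowthFDeriv g)
    (hP : ∀ n : ℕ, MemLp id n P) (X : StrongDual ℝ E) : Integrable (fun x => g x * X x) P :=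
  (hg.hasPolyGrowth.mul (.of_continuousLinearMap X)).integrable_comp hP
    (hg.differentiable.continuous.mul X.continuous).aestronglyMeasurable

theorem HasPolyGrowthFDeriv.integrable_fderiv_apply [OpensMeasurableSpace E] {P : Measure E}
    [IsFiniteMeasure P] {g : E → ℝ} (hg : HasPolyGrowthFDeriv g)
    (hP : ∀ n : ℕ, MemLp id n P) (v : E) : Integrable (fun x => fderiv ℝ g x v) P :=
  ((HasPolyGrowth.of_continuousLinearMap (ContinuousLinearMap.apply ℝ ℝ v)).comp
    hg.fderiv_hasPolyGrowth).integrable_comp hP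
      (measurable_fderiv_apply_const ℝ g v).aestronglyMeasurable

theorem hasDerivAt_gaussianPDFReal (m : ℝ) (v : NNReal) (x : ℝ) :
    HasDerivAt (gaussianPDFReal m v) (-((x - m) / v) * gaussianPDFReal m v x) x := by
  have exponent : HasDerivAt (fun x : ℝ => -(x - m) ^ 2 / (2 * v)) (-((x - m) / v)) x := by
    refine (((((hasDerivAt_id x).sub_const m).pow 2).neg).div_const (2 * (v : ℝ))).congr_deriv ?_
    simp only [id, Nat.cast_ofNat, Nat.add_one_sub_one, pow_one, mul_one]
    ring
  rw [gaussianPDFReal_def]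
  exact (exponent.exp.const_mul _).congr_deriv (by ring)

theorem integrable_gaussianReal_iff {F : Type*} [NormedAddCommGroup F] [NormedSpace ℝ F] {m : ℝ}
    {v : NNReal} (hv : v ≠ 0) {h : ℝ → F} :
    Integrable h (gaussianReal m v) ↔ Integrable (fun x => gaussianPDFReal m v x • h x) := by
  rw [gaussianReal_of_var_ne_zero m hv, integrable_withDensity_iff_integrable_smul'
    (measurable_gaussianPDF m v) (.of_forall fun _ => gaussianPDF_lt_top)]
  simp only [toReal_gaussianPDF]

theorem isSteinPair_gaussianReal (v : NNReal) :
    IsSteinPair (gaussianReal 0 v) (ContinuousLinearMap.id ℝ ℝ) (v : ℝ) := by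
  intro g hg
  rcases eq_or_ne v 0 with rfl | hv
  · simp
  have hv' : (v : ℝ) ≠ 0 := by exact_mod_cast hv
  let φ := gaussianPDFReal 0 v
  have moments (n : ℕ) : MemLp id n (gaussianReal 0 v) := memLp_id_gaussianReal n
  have int_mul : Integrable fun x => φ x * g x :=
    (integrable_gaussianReal_iff hv).1 (hg.integrable_comp moments)
  have int_mul_deriv : Integrable fun x => φ x * deriv g x := by
    simpa using (integrable_gaussianReal_iff hv).1 (hg.integrable_fderiv_apply moments 1)
  have int_mul_id : Integrable fun x => φ x * (g x * x) :=
    (integrable_gaussianReal_iff hv).1 (hg.integrable_mul_dual moments (.id ℝ ℝ))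
  have by_parts : ∫ x, φ x * deriv g x = -∫ x, -((x - 0) / v) * φ x * g x :=
    integral_mul_deriv_eq_deriv_mul_of_integrable
      (fun x _ => hasDerivAt_gaussianPDFReal 0 v x) (fun x _ => (hg.differentiable x).hasDerivAt)
      int_mul_deriv ((int_mul_id.const_mul (-(v : ℝ)⁻¹)).congr (.of_forall fun x => by
        simp only [Pi.mul_apply]; ring)) int_mul
  calc ∫ x, g x * x ∂(gaussianReal 0 v) = ∫ x, φ x * (g x * x) :=
        integral_gaussianReal_eq_integral_smul hv
    _ = v * -∫ x, -((x - 0) / v) * φ x * g x := by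
        rw [← integral_neg, ← integral_const_mul]
        congr 1 with x
        field_simp
        ring
    _ = v * ∫ x, φ x * deriv g x := by rw [by_parts]
    _ = ∫ x, φ x * fderiv ℝ g x v := by
        rw [← integral_const_mul]
        congr 1 with x
        rw [fderiv_eq_smul_deriv, smul_eq_mul]
        ring
    _ = ∫ x, fderiv ℝ g x v ∂(gaussianReal 0 v) :=
        (integral_gaussianReal_eq_integral_smul hv).symm

theorem IsSteinPair.pi {ι : Type*} [Fintype ι] [DecidableEq ι] {E : ι → Type*}
    [∀ i, NormedAddCommGroup (E i)] [∀ i, NormedSpace ℝ (E i)] [∀ i, MeasurableSpace (E i)]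
    [∀ i, OpensMeasurableSpace (E i)] [∀ i, SecondCountableTopology (E i)]
    {P : ∀ i, Measure (E i)} [∀ i, IsProbabilityMeasure (P i)]
    (hP : ∀ i, ∀ n : ℕ, MemLp id n (P i)) {i : ι} {X : StrongDual ℝ (E i)} {v : E i}
    (hX : IsSteinPair (P i) X v) :
    IsSteinPair (Measure.pi P) (X.comp (ContinuousLinearMap.proj i)) (Pi.single i v) := by
  intro g hg
  have moments (n : ℕ) : MemLp id n (Measure.pi P) := memLp_id_pi fun i => hP i n
  rw [integral_pi_eq_integral_integral_update P i (hg.integrable_mul_dual moments _),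
    integral_pi_eq_integral_integral_update P i (hg.integrable_fderiv_apply moments _)]
  congr 1 with x
  let a := Function.update x i 0
  have update_eq (t : E i) : Function.update x i t = a + ContinuousLinearMap.single ℝ E i t := by
    ext j
    rcases eq_or_ne j i with rfl | hj <;> simp [a, *]
  calc ∫ t, g (Function.update x i t) * X (Function.update x i t i) ∂(P i)
      = ∫ t, g (a + ContinuousLinearMap.single ℝ E i t) * X t ∂(P i) := by
        simp only [update_eq, Function.update_self]
    _ = ∫ t, fderiv ℝ (fun t => g (a + ContinuousLinearMap.single ℝ E i t)) t v ∂(P i) :=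
        hX _ (hg.comp_const_add_continuousLinearMap a _)
    _ = ∫ t, fderiv ℝ g (Function.update x i t) (Pi.single i v) ∂(P i) := by
        simp only [fderiv_comp_const_add_continuousLinearMap hg.differentiable, update_eq]
        rfl

theorem IsSteinPair.integral_sub_mul_eq_fderiv [OpensMeasurableSpace E] [FiniteDimensional ℝ H]
    {P : Measure E} [IsFiniteMeasure P] (hP : ∀ n : ℕ, MemLp id n P) {X : StrongDual ℝ E} {v : E}
    (hX : IsSteinPair P X v) {f : H → ℝ} (hf : HasPolyGrowthFDeriv f) (T : E →L[ℝ] H) (W : H) :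
    ∫ x, (f (W + T x) - f W) * X x ∂P = fderiv ℝ (fun W => ∫ x, f (W + T x) ∂P) W (T v) := by
  have moments (n : ℕ) : MemLp T n P := T.comp_memLp' (hP n)
  have fderiv_integrable : Integrable (fun x => fderiv ℝ f (W + T x)) P :=
    hf.integrable_fderiv_comp fun n => (memLp_const W).add (moments n)
  calc ∫ x, (f (W + T x) - f W) * X x ∂P
      = ∫ x, fderiv ℝ (fun x => f (W + T x) - f W) x v ∂P :=
        hX _ ((hf.comp_const_add_continuousLinearMap W T).sub_const _)
    _ = ∫ x, fderiv ℝ f (W + T x) (T v) ∂P := by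
        simp only [fderiv_sub_const, fderiv_comp_const_add_continuousLinearMap hf.differentiable,
          ContinuousLinearMap.comp_apply]
    _ = (∫ x, fderiv ℝ f (W + T x) ∂P) (T v) :=
        (ContinuousLinearMap.integral_apply fderiv_integrable _).symm
    _ = fderiv ℝ (fun W => ∫ x, f (W + T x) ∂P) W (T v) := by
        rw [(hf.hasFDerivAt_integral_add moments W).fderiv]

end SteinIdentity

section Blocks

instance isProbabilityMeasure_gaussBlocks : IsProbabilityMeasure (gaussBlocks dout r) := by
  unfold gaussBlocks
  infer_instance

theorem memLp_id_gaussBlocks (n : ℕ) : MemLp id n (gaussBlocks dout r) :=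
  memLp_id_pi fun _ => memLp_id_pi fun _ => memLp_id_pi fun _ => memLp_id_gaussianReal n

/-- The linear functional `R ↦ R_{ℓ,i,k}` on block matrices. -/
def blockEntry (ℓ : Fin L) (i : Fin (dout ℓ)) (k : Fin (r ℓ)) :
    StrongDual ℝ ((ℓ : Fin L) → Fin (dout ℓ) → Fin (r ℓ) → ℝ) :=
  (ContinuousLinearMap.proj (φ := fun _ => ℝ) k).comp
    ((ContinuousLinearMap.proj (φ := fun _ => Fin (r ℓ) → ℝ) i).comp (.proj ℓ))

theorem isSteinPair_gaussBlocks (ℓ : Fin L) (i : Fin (dout ℓ)) (k : Fin (r ℓ)) :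
    IsSteinPair (gaussBlocks dout r) (blockEntry ℓ i k)
      (Pi.single ℓ (Pi.single i (Pi.single k 1))) := by
  have entry_moments (n : ℕ) : MemLp id n (gaussianReal 0 1) := memLp_id_gaussianReal n
  have row_moments (m n : ℕ) : MemLp id n (Measure.pi fun _ : Fin m => gaussianReal 0 1) :=
    memLp_id_pi fun _ => entry_moments n
  have entry : IsSteinPair (gaussianReal 0 1) (.id ℝ ℝ) 1 := by
    simpa only [NNReal.coe_one] using isSteinPair_gaussianReal 1
  have row := entry.pi (P := fun _ => gaussianReal 0 1) (i := k) fun _ => entry_moments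
  have block := row.pi (P := fun _ => Measure.pi fun _ => gaussianReal 0 1) (i := i)
    fun _ => row_moments (r ℓ)
  exact block.pi (i := ℓ)
    (P := fun ℓ => Measure.pi fun _ : Fin (dout ℓ) => Measure.pi fun _ => gaussianReal 0 1)
    fun ℓ n => memLp_id_pi fun _ => row_moments (r ℓ) n

theorem matExp_mul {Ω ι κ τ : Type*} [MeasurableSpace Ω] [Fintype κ] {P : Measure Ω}
    {F : Ω → Matrix ι κ ℝ} (hF : ∀ i k, Integrable (fun ω => F ω i k) P) (B : Matrix κ τ ℝ) :
    matExp P F * B = matExp P fun ω => F ω * B := by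
  ext i j
  simp only [matExp, Matrix.mul_apply, Matrix.of_apply]
  rw [integral_finsetSum _ fun k _ => (hF i k).mul_const (B k j)]
  simp only [integral_mul_const]

variable {f : ((ℓ : Fin L) → Matrix (Fin (dout ℓ)) (Fin (din ℓ)) ℝ) → ℝ}
  (A : (ℓ : Fin L) → Matrix (Fin (din ℓ)) (Fin (r ℓ)) ℝ)
  (W : (ℓ : Fin L) → Matrix (Fin (dout ℓ)) (Fin (din ℓ)) ℝ) (ℓ : Fin L)

theorem gradBlock_mul_apply {κ : Type*} (B : Matrix (Fin (din ℓ)) κ ℝ) (i : Fin (dout ℓ)) (k : κ) :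
    (gradBlock f W ℓ * B) i k =
      fderiv ℝ f W (Pi.single ℓ (Matrix.of (Pi.single i (Bᵀ k)))) := by
  have single_row : Matrix.of (Pi.single i (Bᵀ k)) = ∑ j, B j k • Matrix.single i j (1 : ℝ) := by
    ext i' j'
    rcases eq_or_ne i' i with rfl | hi
    · simp [Matrix.sum_apply, Matrix.single_apply]
    · simp [Matrix.sum_apply, hi, hi.symm]
  let D : Matrix (Fin (dout ℓ)) (Fin (din ℓ)) ℝ →L[ℝ] ℝ :=
    (fderiv ℝ f W).comp
      (.single ℝ (fun ℓ => Matrix (Fin (dout ℓ)) (Fin (din ℓ)) ℝ) ℓ)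
  calc (gradBlock f W ℓ * B) i k = ∑ j, D (Matrix.single i j 1) * B j k := Matrix.mul_apply
    _ = D (∑ j, B j k • Matrix.single i j 1) := by
        simp only [map_sum, map_smul, smul_eq_mul, mul_comm]
    _ = D (Matrix.of (Pi.single i (Bᵀ k))) := by rw [single_row]

theorem perturbA_single (i : Fin (dout ℓ)) (k : Fin (r ℓ)) :
    perturbA A (Pi.single ℓ (Pi.single i (Pi.single k 1))) =
      Pi.single ℓ (Matrix.of (Pi.single i ((A ℓ)ᵀ k))) := by
  ext m i' j
  rcases eq_or_ne m ℓ with rfl | hm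
  · rcases eq_or_ne i' i with rfl | hi
    · simp [perturbA, Matrix.mul_apply, Pi.single_apply]
    · simp [perturbA, Matrix.mul_apply, hi]
  · simp [perturbA, hm]

/-- `perturbA A` as a continuous linear map. -/
def perturbCLM : ((ℓ : Fin L) → Fin (dout ℓ) → Fin (r ℓ) → ℝ) →L[ℝ]
    ((ℓ : Fin L) → Matrix (Fin (dout ℓ)) (Fin (din ℓ)) ℝ) :=
  LinearMap.toContinuousLinearMap
    { toFun := perturbA A
      map_add' := fun R S => funext fun ℓ => Matrix.add_mul (Matrix.of (R ℓ)) (Matrix.of (S ℓ)) _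
      map_smul' := fun c R => funext fun ℓ => Matrix.smul_mul c (Matrix.of (R ℓ)) _ }

theorem gradBlock_smoothedA_mul (hf : HasPolyGrowthFDeriv f) {μ : ℝ} (hμ : μ ≠ 0) :
    gradBlock (smoothedA f μ A) W ℓ * A ℓ =
      matExp (gaussBlocks dout r) fun R =>
        ((f (W + μ • perturbA A R) - f W) / μ) • Matrix.of (R ℓ) := by
  ext i k
  let e : (ℓ : Fin L) → Fin (dout ℓ) → Fin (r ℓ) → ℝ := Pi.single ℓ (Pi.single i (Pi.single k 1))
  have stein : ∫ R, (f (W + μ • perturbA A R) - f W) * R ℓ i k ∂(gaussBlocks dout r) =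
      fderiv ℝ (smoothedA f μ A) W (μ • perturbA A e) :=
    (isSteinPair_gaussBlocks ℓ i k).integral_sub_mul_eq_fderiv memLp_id_gaussBlocks hf
      (μ • perturbCLM A) W
  calc (gradBlock (smoothedA f μ A) W ℓ * A ℓ) i k
      = fderiv ℝ (smoothedA f μ A) W (perturbA A e) := by
        rw [gradBlock_mul_apply, perturbA_single]
    _ = μ⁻¹ * ∫ R, (f (W + μ • perturbA A R) - f W) * R ℓ i k ∂(gaussBlocks dout r) := by
        rw [stein, map_smul, smul_eq_mul, inv_mul_cancel_left₀ hμ]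
    _ = ∫ R, (f (W + μ • perturbA A R) - f W) / μ * R ℓ i k ∂(gaussBlocks dout r) := by
        rw [← integral_const_mul]
        congr 1 with R
        ring

theorem integrable_twoPointEstimator_apply (hf : HasPolyGrowthFDeriv f) (μ : ℝ)
    (i : Fin (dout ℓ)) (k : Fin (r ℓ)) :
    Integrable (fun R => (((f (W + μ • perturbA A R) - f W) / μ) • Matrix.of (R ℓ)) i k)
      (gaussBlocks dout r) := by
  have difference : HasPolyGrowthFDeriv fun R => f (W + (μ • perturbCLM A) R) - f W :=
    (hf.comp_const_add_continuousLinearMap W (μ • perturbCLM A)).sub_const (f W)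
  refine ((difference.integrable_mul_dual memLp_id_gaussBlocks (blockEntry ℓ i k)).div_const
    μ).congr (.of_forall fun R => ?_)
  exact mul_div_right_comm (f (W + μ • perturbA A R) - f W) (R ℓ i k) μ

theorem agzo_subspace_smoothing_two_point_general (hf : HasPolyGrowthFDeriv f) {μ : ℝ}
    (hμ : μ ≠ 0) :
    gradBlock (smoothedA f μ A) W ℓ * (A ℓ * (A ℓ)ᵀ) =
      matExp (gaussBlocks dout r) fun R =>
        ((f (W + μ • perturbA A R) - f W) / μ) • (Matrix.of (R ℓ) * (A ℓ)ᵀ) := by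
  rw [← Matrix.mul_assoc, gradBlock_smoothedA_mul A W ℓ hf hμ,
    matExp_mul (integrable_twoPointEstimator_apply A W ℓ hf μ)]
  simp only [Matrix.smul_mul]

end Blocks

/-- the expected AGZO two-point finite-difference estimator equals the
gradient of the subspace-smoothed objective projected onto `span(A_ℓ)`:
`∇_{W_ℓ} f_{μ,A}(W) · A_ℓA_ℓᵀ = E_R[((f(W + μΔ(R)) − f(W))/μ) · R_ℓA_ℓᵀ]`. -/
theorem agzo_subspace_smoothing_two_point
    (L : ℕ) (hL : 0 < L) (dout din r : Fin L → ℕ)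
    (hdout : ∀ ℓ, 0 < dout ℓ) (hdin : ∀ ℓ, 0 < din ℓ) (hr : ∀ ℓ, 0 < r ℓ)
    (A : (ℓ : Fin L) → Matrix (Fin (din ℓ)) (Fin (r ℓ)) ℝ)
    (hA : ∀ ℓ, (A ℓ)ᵀ * A ℓ = 1)
    (f : ((ℓ : Fin L) → Matrix (Fin (dout ℓ)) (Fin (din ℓ)) ℝ) → ℝ)
    (hf : Differentiable ℝ f) (Lip : ℝ)
    (hLip : ∀ W W', ‖fderiv ℝ f W - fderiv ℝ f W'‖ ≤ Lip * ‖W - W'‖)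
    (μ : ℝ) (hμ : 0 < μ)
    (W : (ℓ : Fin L) → Matrix (Fin (dout ℓ)) (Fin (din ℓ)) ℝ) :
    ∀ ℓ, gradBlock (smoothedA f μ A) W ℓ * (A ℓ * (A ℓ)ᵀ) =
      matExp (gaussBlocks dout r)
        (fun R => ((f (W + μ • perturbA A R) - f W) / μ) •
          (Matrix.of (R ℓ) * (A ℓ)ᵀ)) := by
  have grad_lipschitz : LipschitzWith Lip.toNNReal (fderiv ℝ f) :=
    .of_dist_le' fun W W' => by simpa only [dist_eq_norm] using hLip W W'
  exact fun ℓ => agzo_subspace_smoothing_two_point_general A W ℓ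
    ⟨hf, .of_lipschitzWith grad_lipschitz⟩ hμ.ne'

end
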